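/- In the block Markov chain model, let X be a sample path starting in equilibrium, fix k₁, k₂ ∈ {1,…,K} with p_{k₁,k₂} > 0, for each n a directed edge e_n ∈ V_{k₁} × V_{k₂}, and let Y be a Poisson random variable with rate λ π(k₁) α_{k₁}^{−1} α_{k₂}^{−1} p_{k₁,k₂}. Then for every m ∈ ℤ≥0, E[N_{X,e_n}^m] → E[Y^m] as n → ∞. -/

import Mathlib

/-!
The proof is by the method of factorial moments. Write `e = (e₁, e₂)` for the edge, `P` for the
transition matrix, `Π` for the equilibrium law, `N` for the edge count and `c = Π(e₁) P(e₁, e₂)`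
for the probability of traversing `e` at a given time; then `c ℓ` tends to the Poisson rate `μ`.

Conditioning on the first step and using Pascal's rule, the binomial moments
`A_m(L) = E_{e₂}[C(N_L, m)]` of the chain started at `e₂` satisfy the renewal equation
`A_{m+1}(L) = ∑_{s<L} P^s(e₂, e₁) P(e₁, e₂) A_m(L-1-s)` (`startBinom_renewal`), and the
stationary chain has binomial moments `∑_{t<ℓ} c A_m(t)` (`pathMean_binom`). If the kernel
`P^s(e₂, e₁) P(e₁, e₂)` were the constant `c`, then the hockey-stick identity would give
`A_m(L) = c^m C(L, m)` exactly. The kernel differs from `c` by an amount whose `ℓ¹`-norm `D` in `s`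
is `O(1/n)`, and `renewal_estimate` shows that the resulting error is at most a constant times `D`
as long as `c L` stays bounded. The bound on `D` (`bmc_deviation`) follows from
`P^s(x, y) = p^s(σ x, σ y) / #V_{σ y}` for `s ≥ 1` and from the summability of
`|p^s(i, k) - π(k)|` in `s` for a primitive `p` (`ergodic_sum`, a Doeblin contraction argument).

Hence the `j`-th factorial moment of `N` tends to `μ^j`, the `j`-th factorial moment of the Poisson
law. Ordinary moments follow (`moments_of_factorial_moments`) from
`k · (k)_j = (k)_{j+1} + j (k)_j`.
-/


open MeasureTheory ProbabilityTheory Filter Asymptotics Matrix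
open scoped ENNReal NNReal BigOperators Topology

noncomputable section

/-- number of vertices in cluster `k` -/
def clusterCard {K : ℕ} (n : ℕ) (σ : Fin n → Fin K) (k : Fin K) : ℕ :=
  (Finset.univ.filter fun v : Fin n => σ v = k).card

/-- transition matrix of the block Markov chain -/
def bmcTrans {K n : ℕ} (p : Matrix (Fin K) (Fin K) ℝ) (σ : Fin n → Fin K)
    (x y : Fin n) : ℝ :=
  p (σ x) (σ y) / (clusterCard n σ (σ y) : ℝ)

/-- equilibrium distribution of the block Markov chain -/
def bmcEquilib {K n : ℕ} (pst : Fin K → ℝ) (σ : Fin n → Fin K) (v : Fin n) : ℝ :=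
  pst (σ v) / (clusterCard n σ (σ v) : ℝ)

/-- law of a sample path of length `ℓ+1` with one-step transition probabilities `P`
and initial distribution `ι` -/
def pathLaw (n ℓ : ℕ) (P : Fin n → Fin n → ℝ) (ι : Fin n → ℝ) :
    Measure (Fin (ℓ + 1) → Fin n) :=
  ∑ x : Fin (ℓ + 1) → Fin n,
    ENNReal.ofReal (ι (x 0) * ∏ t : Fin ℓ, P (x t.castSucc) (x t.succ)) • Measure.dirac x

/-- empirical frequency matrix -/
def freqMatrix (n ℓ : ℕ) (ω : Fin (ℓ + 1) → Fin n) : Matrix (Fin n) (Fin n) ℝ :=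
  Matrix.of fun i j => ∑ t : Fin ℓ, if ω t.castSucc = i ∧ ω t.succ = j then (1 : ℝ) else 0

/-- the number `N_{X,e}` of traversals of the directed edge `e` -/
def edgeCount (n ℓ : ℕ) (ω : Fin (ℓ + 1) → Fin n) (e : Fin n × Fin n) : ℕ :=
  (Finset.univ.filter fun t : Fin ℓ => ω t.castSucc = e.1 ∧ ω t.succ = e.2).card

/-- probability mass function of the Poisson distribution with mean `r` -/
def poissonPMF (r : ℝ) (k : ℕ) : ℝ := Real.exp (-r) * r ^ k / (Nat.factorial k)

/-! ### Ergodicity of the cluster chain -/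

/-- A primitive stochastic matrix converges to equilibrium with summable error. With `d > 0` a
lower bound for the entries of `p ^ r`, the matrix `p ^ r - d • 1 π` is nonnegative with row sums
`1 - d` and agrees with `p ^ r` on vectors orthogonal to `π`, so `p ^ r` contracts the sup norm of
the deviations by the factor `1 - d`. -/
theorem ergodic_sum {K : ℕ} (p : Matrix (Fin K) (Fin K) ℝ)
    (hp0 : ∀ i j, 0 ≤ p i j) (hp1 : ∀ i, ∑ j, p i j = 1)
    (hprim : ∃ r : ℕ, 0 < r ∧ ∀ i j, 0 < (p ^ r) i j)
    (pst : Fin K → ℝ) (hpst0 : ∀ i, 0 ≤ pst i) (hpst1 : ∑ i, pst i = 1)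
    (hstat : ∀ j, ∑ i, pst i * p i j = pst j) (i k : Fin K) :
    ∃ C : ℝ, 0 ≤ C ∧ ∀ S : ℕ, ∑ s ∈ Finset.range S, |(p ^ s) i k - pst k| ≤ C := by
  obtain ⟨r, -, hr⟩ := hprim
  have hrow : ∀ s i, ∑ j, (p ^ s) i j = 1 := by
    intro s
    induction s with
    | zero => intro i; simp [Matrix.one_apply]
    | succ s ih =>
      intro i
      simp_rw [pow_succ', Matrix.mul_apply]
      rw [Finset.sum_comm]
      simp_rw [← Finset.mul_sum, ih, mul_one, hp1]
  have hst : ∀ s j, ∑ i, pst i * (p ^ s) i j = pst j := by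
    intro s
    induction s with
    | zero => intro j; simp [Matrix.one_apply]
    | succ s ih =>
      intro j
      simp_rw [pow_succ, Matrix.mul_apply, Finset.mul_sum]
      rw [Finset.sum_comm]
      simp_rw [← mul_assoc, ← Finset.sum_mul, ih, hstat]
  obtain ⟨d, hd0, hd⟩ : ∃ d : ℝ, 0 < d ∧ ∀ i j, d ≤ (p ^ r) i j := by
    have : Nonempty (Fin K × Fin K) := ⟨(i, i)⟩
    obtain ⟨q, hq⟩ := Finite.exists_min (fun q : Fin K × Fin K => (p ^ r) q.1 q.2)
    exact ⟨_, hr q.1 q.2, fun i j => hq (i, j)⟩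
  have hpst_le : ∀ j, pst j ≤ 1 := fun j => by
    rw [← hpst1]; exact Finset.single_le_sum (fun i _ => hpst0 i) (Finset.mem_univ j)
  -- `w s` is the `k`-th column of `p ^ s` minus its limit; it is orthogonal to `pst`.
  let w : ℕ → Fin K → ℝ := fun s i => (p ^ s) i k - pst k
  have hw : ∀ t s i, w (t + s) i = ∑ j, (p ^ t) i j * w s j := by
    intro t s i
    simp only [w, pow_add, Matrix.mul_apply, mul_sub, Finset.sum_sub_distrib, ← Finset.sum_mul,
      hrow, one_mul]
  have hw0 : ∀ s, ∑ j, pst j * w s j = 0 := by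
    intro s
    simp only [w, mul_sub, Finset.sum_sub_distrib, hst, ← Finset.sum_mul, hpst1, one_mul, sub_self]
  have hcontr : ∀ s, ‖w (s + r)‖ ≤ (1 - d) * ‖w s‖ := by
    intro s
    have hd1 : 0 ≤ 1 - d := by
      have := hd i i
      have h2 : (p ^ r) i i ≤ 1 := by
        rw [← hrow r i]
        exact Finset.single_le_sum (fun j _ => (hr i j).le) (Finset.mem_univ i)
      linarith
    refine (pi_norm_le_iff_of_nonneg (by positivity)).2 fun i => ?_
    have h1 : w (s + r) i = ∑ j, ((p ^ r) i j - d * pst j) * w s j := by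
      rw [add_comm, hw]
      simp_rw [sub_mul, Finset.sum_sub_distrib, mul_assoc, ← Finset.mul_sum, hw0]
      simp
    rw [h1]
    calc _ ≤ ∑ j, ‖((p ^ r) i j - d * pst j) * w s j‖ := norm_sum_le _ _
      _ ≤ ∑ j, ((p ^ r) i j - d * pst j) * ‖w s‖ := by
        refine Finset.sum_le_sum fun j _ => ?_
        have h3 : 0 ≤ (p ^ r) i j - d * pst j := by nlinarith [hd i j, hpst_le j]
        rw [norm_mul, Real.norm_of_nonneg h3]
        exact mul_le_mul_of_nonneg_left (norm_le_pi_norm _ _) h3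
      _ = _ := by
        rw [← Finset.sum_mul, Finset.sum_sub_distrib, hrow, ← Finset.mul_sum, hpst1, mul_one]
  have hmono : ∀ s, ‖w s‖ ≤ ‖w 0‖ := by
    intro s
    refine (pi_norm_le_iff_of_nonneg (by positivity)).2 fun i => ?_
    have hpos : ∀ s i j, 0 ≤ (p ^ s) i j := by
      intro s
      induction s with
      | zero => intro i j; simp only [pow_zero, Matrix.one_apply]; split_ifs <;> norm_num
      | succ s ih =>
        intro i j
        rw [pow_succ, Matrix.mul_apply]
        exact Finset.sum_nonneg fun l _ => mul_nonneg (ih _ _) (hp0 _ _)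
    have := hw s 0 i
    rw [add_zero] at this
    rw [this]
    calc _ ≤ ∑ j, ‖(p ^ s) i j * w 0 j‖ := norm_sum_le _ _
      _ ≤ ∑ j, (p ^ s) i j * ‖w 0‖ := by
        refine Finset.sum_le_sum fun j _ => ?_
        rw [norm_mul, Real.norm_of_nonneg (hpos s i j)]
        exact mul_le_mul_of_nonneg_left (norm_le_pi_norm _ _) (hpos s i j)
      _ = _ := by rw [← Finset.sum_mul, hrow, one_mul]
  refine ⟨r * ‖w 0‖ / d, by positivity, fun S => ?_⟩
  have hle : ∑ s ∈ Finset.range S, |(p ^ s) i k - pst k| ≤ ∑ s ∈ Finset.range S, ‖w s‖ :=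
    Finset.sum_le_sum fun s _ => norm_le_pi_norm (w s) i
  refine hle.trans ?_
  -- With `T = ∑_{s<S} ‖w s‖`, splitting off the first `r` terms of `∑_{s<r+S} ‖w s‖` gives
  -- `T ≤ r ‖w 0‖ + (1 - d) T`.
  rw [le_div_iff₀ hd0]
  have h1 : ∑ s ∈ Finset.range S, ‖w s‖ ≤ ∑ s ∈ Finset.range (r + S), ‖w s‖ :=
    Finset.sum_le_sum_of_subset_of_nonneg (Finset.range_mono (by omega))
      fun _ _ _ => norm_nonneg _
  rw [Finset.sum_range_add] at h1
  have h2 : ∑ s ∈ Finset.range r, ‖w s‖ ≤ r * ‖w 0‖ := by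
    have := Finset.sum_le_sum (s := Finset.range r) fun s _ => hmono s
    simpa using this
  have h3 : ∑ s ∈ Finset.range S, ‖w (r + s)‖ ≤ (1 - d) * ∑ s ∈ Finset.range S, ‖w s‖ := by
    rw [Finset.mul_sum]
    exact Finset.sum_le_sum fun s _ => by rw [add_comm]; exact hcontr s
  linarith

/-! ### The renewal estimate -/

theorem choose_succ_eq_sum (L m : ℕ) :
    (L.choose (m + 1) : ℝ) = ∑ s ∈ Finset.range L, (s.choose m : ℝ) := by
  induction L with
  | zero => simp
  | succ L ih => rw [Finset.sum_range_succ, ← ih, Nat.choose_succ_succ]; push_cast; ring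

/-- A solution `A` of the renewal equation with kernel `h` is close to `c ^ m * C(L, m)`, the
solution for the constant kernel `c`, when `h` is `ℓ¹`-close to `c`. The constant `C` depends only
on `m` and on the bound `M` for `c * L`. -/
theorem renewal_estimate (m : ℕ) (M : ℝ) (hM : 0 ≤ M) :
    ∃ C : ℝ, 0 ≤ C ∧ ∀ (h : ℕ → ℝ) (c D : ℝ) (A : ℕ → ℕ → ℝ), 0 ≤ c → 0 ≤ D → D ≤ 1 →
      (∀ S, ∑ s ∈ Finset.range S, |h s - c| ≤ D) →
      (∀ L, A 0 L = 1) →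
      (∀ j L, A (j + 1) L = ∑ s ∈ Finset.range L, h s * A j (L - 1 - s)) →
      ∀ L : ℕ, c * L ≤ M → |A m L - c ^ m * (L.choose m : ℝ)| ≤ C * D := by
  induction m with
  | zero =>
    refine ⟨0, le_rfl, fun h c D A _ _ _ _ hA _ L _ => ?_⟩
    simp [hA]
  | succ m ih =>
    obtain ⟨C, hC, ih⟩ := ih
    refine ⟨(M ^ m + C) + M * C, by positivity, fun h c D A hc hD hD1 hh hA0 hA L hL => ?_⟩
    have key : ∀ s ∈ Finset.range L,
        |A m (L - 1 - s) - c ^ m * ((L - 1 - s).choose m : ℝ)| ≤ C * D := by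
      intro s _
      refine ih h c D A hc hD hD1 hh hA0 hA _ (le_trans ?_ hL)
      have : ((L - 1 - s : ℕ) : ℝ) ≤ L := by exact_mod_cast (by omega)
      gcongr
    have hAb : ∀ s ∈ Finset.range L, |A m (L - 1 - s)| ≤ M ^ m + C := by
      intro s hs
      have h1 := key s hs
      have h2 : c ^ m * ((L - 1 - s).choose m : ℝ) ≤ M ^ m := by
        have h3 : ((L - 1 - s).choose m : ℝ) ≤ (L : ℝ) ^ m := by
          have : (L - 1 - s).choose m ≤ L ^ m :=
            (Nat.choose_le_pow _ _).trans (Nat.pow_le_pow_left (by omega) _)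
          exact_mod_cast this
        calc _ ≤ c ^ m * (L : ℝ) ^ m := by gcongr
          _ = (c * L) ^ m := by rw [mul_pow]
          _ ≤ M ^ m := by gcongr
      have h4 : 0 ≤ c ^ m * ((L - 1 - s).choose m : ℝ) := by positivity
      have h5 : C * D ≤ C := by nlinarith
      rw [abs_le] at h1 ⊢
      constructor <;> nlinarith [pow_nonneg hM m]
    have hockey : (L.choose (m + 1) : ℝ)
        = ∑ s ∈ Finset.range L, ((L - 1 - s).choose m : ℝ) := by
      rw [Finset.sum_range_reflect (fun s => (s.choose m : ℝ))]
      exact choose_succ_eq_sum L m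
    have split : A (m + 1) L - c ^ (m + 1) * (L.choose (m + 1) : ℝ)
        = ∑ s ∈ Finset.range L, ((h s - c) * A m (L - 1 - s)
          + c * (A m (L - 1 - s) - c ^ m * ((L - 1 - s).choose m : ℝ))) := by
      rw [hA, hockey, Finset.mul_sum, ← Finset.sum_sub_distrib]
      exact Finset.sum_congr rfl fun s _ => by ring
    rw [split]
    calc _ ≤ ∑ s ∈ Finset.range L, |(h s - c) * A m (L - 1 - s)
          + c * (A m (L - 1 - s) - c ^ m * ((L - 1 - s).choose m : ℝ))| :=
          Finset.abs_sum_le_sum_abs _ _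
      _ ≤ ∑ s ∈ Finset.range L, (|h s - c| * (M ^ m + C) + c * (C * D)) := by
          refine Finset.sum_le_sum fun s hs => (abs_add_le _ _).trans ?_
          rw [abs_mul, abs_mul, abs_of_nonneg hc]
          have := hAb s hs
          have := key s hs
          gcongr
      _ = (∑ s ∈ Finset.range L, |h s - c|) * (M ^ m + C) + c * L * (C * D) := by
          rw [Finset.sum_add_distrib, Finset.sum_mul]; simp; ring
      _ ≤ D * (M ^ m + C) + M * (C * D) := by
          have := hh L
          gcongr
      _ = _ := by ring

/-! ### Binomial moments of the edge count -/

/-- The expectation of `f` applied to the edge count of a path of `ℓ` steps with transition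
probabilities `P` and initial distribution `ι`, as a finite sum over paths. -/
def pathMean (n ℓ : ℕ) (P : Fin n → Fin n → ℝ) (ι : Fin n → ℝ) (e : Fin n × Fin n)
    (f : ℕ → ℝ) : ℝ :=
  ∑ x : Fin (ℓ + 1) → Fin n,
    (ι (x 0) * ∏ t : Fin ℓ, P (x t.castSucc) (x t.succ)) * f (edgeCount n ℓ x e)

theorem integral_pathLaw (n ℓ : ℕ) (P : Fin n → Fin n → ℝ) (ι : Fin n → ℝ) (e : Fin n × Fin n)
    (hP : ∀ x y, 0 ≤ P x y) (hι : ∀ x, 0 ≤ ι x) (f : ℕ → ℝ) :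
    ∫ ω, f (edgeCount n ℓ ω e) ∂ pathLaw n ℓ P ι = pathMean n ℓ P ι e f := by
  unfold pathLaw pathMean
  rw [integral_finsetSum_measure]
  · refine Finset.sum_congr rfl fun x _ => ?_
    rw [integral_smul_measure, integral_dirac, ENNReal.toReal_ofReal, smul_eq_mul]
    exact mul_nonneg (hι _) (Finset.prod_nonneg fun t _ => hP _ _)
  · intro x _
    exact (integrable_dirac (by finiteness)).smul_measure ENNReal.ofReal_ne_top

/-- The expectation of `f` applied to the edge count of a path of `ℓ` steps started at `x`; the sum
runs over the `ℓ` positions that follow `x`. -/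
def startMean (n ℓ : ℕ) (P : Fin n → Fin n → ℝ) (e : Fin n × Fin n)
    (f : ℕ → ℝ) (x : Fin n) : ℝ :=
  ∑ ω : Fin ℓ → Fin n,
    (∏ t : Fin ℓ, P ((Fin.cons x ω : Fin (ℓ + 1) → Fin n) t.castSucc)
      ((Fin.cons x ω : Fin (ℓ + 1) → Fin n) t.succ))
      * f (edgeCount n ℓ (Fin.cons x ω : Fin (ℓ + 1) → Fin n) e)

theorem sum_cons {n ℓ : ℕ} (g : (Fin (ℓ + 1) → Fin n) → ℝ) :
    ∑ x, g x = ∑ y : Fin n, ∑ ω : Fin ℓ → Fin n, g (Fin.cons y ω : Fin (ℓ + 1) → Fin n) := by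
  rw [← (Fin.consEquiv fun _ : Fin (ℓ + 1) => Fin n).sum_comp, Fintype.sum_prod_type]
  rfl

theorem pathMean_eq (n ℓ : ℕ) (P : Fin n → Fin n → ℝ) (ι : Fin n → ℝ) (e : Fin n × Fin n)
    (f : ℕ → ℝ) : pathMean n ℓ P ι e f = ∑ x, ι x * startMean n ℓ P e f x := by
  unfold pathMean startMean
  rw [sum_cons]
  refine Finset.sum_congr rfl fun x _ => ?_
  rw [Finset.mul_sum]
  exact Finset.sum_congr rfl fun ω _ => by rw [Fin.cons_zero, mul_assoc]

theorem edgeCount_cons (n ℓ : ℕ) (x : Fin n) (ω : Fin (ℓ + 1) → Fin n) (e : Fin n × Fin n) :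
    edgeCount n (ℓ + 1) (Fin.cons x ω : Fin (ℓ + 2) → Fin n) e
      = edgeCount n ℓ ω e + if x = e.1 ∧ ω 0 = e.2 then 1 else 0 := by
  simp only [edgeCount, Finset.card_filter, Fin.sum_univ_succ (n := ℓ), Fin.castSucc_zero,
    Fin.cons_zero, Fin.cons_succ, ← Fin.succ_castSucc]
  rw [add_comm]

theorem startMean_succ (n ℓ : ℕ) (P : Fin n → Fin n → ℝ) (e : Fin n × Fin n)
    (f : ℕ → ℝ) (x : Fin n) :
    startMean n (ℓ + 1) P e f x = ∑ y, P x y *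
      startMean n ℓ P e (fun k => f (k + if x = e.1 ∧ y = e.2 then 1 else 0)) y := by
  unfold startMean
  rw [sum_cons]
  refine Finset.sum_congr rfl fun y _ => ?_
  rw [Finset.mul_sum]
  refine Finset.sum_congr rfl fun ω _ => ?_
  rw [edgeCount_cons, Fin.prod_univ_succ]
  simp only [Fin.castSucc_zero, Fin.cons_zero, Fin.cons_succ, ← Fin.succ_castSucc]
  ring

/-- The `m`-th binomial moment `E_x[C(N, m)]` of the edge count `N` over `ℓ` steps started at `x`. -/
def startBinom (n : ℕ) (P : Fin n → Fin n → ℝ) (e : Fin n × Fin n) (m ℓ : ℕ) (x : Fin n) : ℝ :=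
  startMean n ℓ P e (fun k => (k.choose m : ℝ)) x

theorem startBinom_zero_left (n : ℕ) (P : Fin n → Fin n → ℝ) (e : Fin n × Fin n)
    (hP : ∀ x, ∑ y, P x y = 1) (ℓ : ℕ) (x : Fin n) : startBinom n P e 0 ℓ x = 1 := by
  unfold startBinom
  simp only [Nat.choose_zero_right, Nat.cast_one]
  induction ℓ generalizing x with
  | zero => simp [startMean]
  | succ ℓ ih => rw [startMean_succ]; simp [ih, hP]

theorem startBinom_succ_zero (n : ℕ) (P : Fin n → Fin n → ℝ) (e : Fin n × Fin n)
    (m : ℕ) (x : Fin n) : startBinom n P e (m + 1) 0 x = 0 := by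
  simp [startBinom, startMean, edgeCount]

/-- First-step decomposition: the count increases by one exactly if the first step traverses `e`,
and then Pascal's rule applies. -/
theorem startBinom_succ_succ (n : ℕ) (P : Fin n → Fin n → ℝ) (e : Fin n × Fin n)
    (m ℓ : ℕ) (x : Fin n) :
    startBinom n P e (m + 1) (ℓ + 1) x = ∑ y, P x y * startBinom n P e (m + 1) ℓ y
      + if x = e.1 then P e.1 e.2 * startBinom n P e m ℓ e.2 else 0 := by
  have hstep : ∀ y, P x y * startMean n ℓ P e
        (fun k => ((k + if x = e.1 ∧ y = e.2 then 1 else 0).choose (m + 1) : ℝ)) y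
      = P x y * startBinom n P e (m + 1) ℓ y
        + if y = e.2 then (if x = e.1 then P x y * startBinom n P e m ℓ y else 0) else 0 := by
    intro y
    by_cases hx : x = e.1 <;> by_cases hy : y = e.2
    · simp only [hx, hy, and_self, if_true, ← mul_add]
      congr 1
      simp only [startBinom, startMean, ← Finset.sum_add_distrib]
      refine Finset.sum_congr rfl fun ω _ => ?_
      rw [Nat.choose_succ_succ]; push_cast; ring
    all_goals simp [hx, hy, startBinom]
  rw [startBinom, startMean_succ]
  simp only [hstep, Finset.sum_add_distrib, Finset.sum_ite_eq', Finset.mem_univ, if_true]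
  congr 1
  split_ifs with h
  · rw [h]
  · rfl

/-- The renewal equation: the summand with index `s` accounts for the first of the `m + 1` chosen
traversals of `e` taking place at step `s`. -/
theorem startBinom_renewal (n : ℕ) (P : Fin n → Fin n → ℝ) (e : Fin n × Fin n)
    (m ℓ : ℕ) (x : Fin n) :
    startBinom n P e (m + 1) ℓ x
      = ∑ s ∈ Finset.range ℓ, (Matrix.of P ^ s) x e.1 * P e.1 e.2 * startBinom n P e m (ℓ - 1 - s) e.2 := by
  induction ℓ generalizing x with
  | zero => simp [startBinom_succ_zero]
  | succ ℓ ih =>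
    rw [startBinom_succ_succ, Finset.sum_range_succ']
    congr 1
    · simp_rw [ih, Finset.mul_sum]
      rw [Finset.sum_comm]
      refine Finset.sum_congr rfl fun s _ => ?_
      rw [pow_succ', Matrix.mul_apply, Finset.sum_mul, Finset.sum_mul]
      refine Finset.sum_congr rfl fun y _ => ?_
      rw [show ℓ + 1 - 1 - (s + 1) = ℓ - 1 - s by omega, Matrix.of_apply]; ring
    · by_cases h : x = e.1 <;> simp [h]

/-- Under a stationary initial law every step is equally likely to traverse `e`. -/
theorem pathMean_binom (n : ℕ) (P : Fin n → Fin n → ℝ) (ι : Fin n → ℝ) (e : Fin n × Fin n)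
    (hι : ∀ y, ∑ x, ι x * P x y = ι y) (m ℓ : ℕ) :
    pathMean n ℓ P ι e (fun k => (k.choose (m + 1) : ℝ))
      = ∑ t ∈ Finset.range ℓ, ι e.1 * P e.1 e.2 * startBinom n P e m t e.2 := by
  rw [pathMean_eq]
  change ∑ x, ι x * startBinom n P e (m + 1) ℓ x = _
  induction ℓ with
  | zero => simp [startBinom_succ_zero]
  | succ ℓ ih =>
    rw [Finset.sum_range_succ, ← ih]
    simp_rw [startBinom_succ_succ, mul_add, Finset.sum_add_distrib, Finset.mul_sum]
    congr 1
    · rw [Finset.sum_comm]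
      simp_rw [← mul_assoc, ← Finset.sum_mul, hι]
    · simp [mul_assoc]

/-- For a stationary chain, the binomial moments of the edge count are close to those of a sum of
`L` independent indicators of probability `ι e.1 * P e.1 e.2`, uniformly in the chain. -/
theorem binom_estimate (m : ℕ) (M : ℝ) (hM : 0 ≤ M) :
    ∃ C : ℝ, 0 ≤ C ∧ ∀ (n : ℕ) (P : Fin n → Fin n → ℝ) (ι : Fin n → ℝ) (e : Fin n × Fin n)
      (D : ℝ), (∀ x, ∑ y, P x y = 1) → (∀ x, ∑ y, ι y * P y x = ι x) → ∑ x, ι x = 1 →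
      0 ≤ ι e.1 * P e.1 e.2 → 0 ≤ D → D ≤ 1 →
      (∀ S, ∑ s ∈ Finset.range S, |(Matrix.of P ^ s) e.2 e.1 * P e.1 e.2 - ι e.1 * P e.1 e.2| ≤ D) →
      ∀ L : ℕ, ι e.1 * P e.1 e.2 * L ≤ M →
      |pathMean n L P ι e (fun k => (k.choose m : ℝ))
        - (ι e.1 * P e.1 e.2) ^ m * (L.choose m : ℝ)| ≤ C * D := by
  cases m with
  | zero =>
    refine ⟨0, le_rfl, fun n P ι e D hP _ hι _ _ _ _ L _ => ?_⟩
    have : pathMean n L P ι e (fun k => (k.choose 0 : ℝ)) = 1 := by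
      rw [pathMean_eq]
      change ∑ x, ι x * startBinom n P e 0 L x = _
      simp [startBinom_zero_left n P e hP, hι]
    rw [this]; simp
  | succ m =>
    obtain ⟨C, hC, h⟩ := renewal_estimate m M hM
    refine ⟨M * C, by positivity, fun n P ι e D hP hst hι hc hD hD1 hh L hL => ?_⟩
    rw [pathMean_binom n P ι e hst]
    set c := ι e.1 * P e.1 e.2
    have key := h (fun s => (Matrix.of P ^ s) e.2 e.1 * P e.1 e.2) c D
      (fun m ℓ => startBinom n P e m ℓ e.2) hc hD hD1 hh
      (fun L => startBinom_zero_left n P e hP L e.2)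
      (fun j L => startBinom_renewal n P e j L e.2)
    rw [choose_succ_eq_sum, Finset.mul_sum, ← Finset.sum_sub_distrib]
    calc _ ≤ ∑ t ∈ Finset.range L, |c * startBinom n P e m t e.2
            - c ^ (m + 1) * (t.choose m : ℝ)| := Finset.abs_sum_le_sum_abs _ _
      _ ≤ ∑ t ∈ Finset.range L, c * (C * D) := by
          refine Finset.sum_le_sum fun t ht => ?_
          rw [pow_succ', mul_assoc c, ← mul_sub, abs_mul, abs_of_nonneg hc]
          refine mul_le_mul_of_nonneg_left (key t (le_trans ?_ hL)) hc
          have : (t : ℝ) ≤ L := by exact_mod_cast (Finset.mem_range.1 ht).le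
          gcongr
      _ = c * L * (C * D) := by simp; ring
      _ ≤ M * (C * D) := by gcongr
      _ = _ := by ring

/-! ### The block Markov chain -/

theorem clusterCard_pos {K n : ℕ} (σ : Fin n → Fin K) (hne : ∀ k, ∃ v, σ v = k) (k : Fin K) :
    0 < clusterCard n σ k := by
  obtain ⟨v, hv⟩ := hne k
  exact Finset.card_pos.2 ⟨v, by simp [hv]⟩

theorem sum_cluster {K n : ℕ} (σ : Fin n → Fin K) (hne : ∀ k, ∃ v, σ v = k) (f : Fin K → ℝ) :
    ∑ y, f (σ y) / (clusterCard n σ (σ y) : ℝ) = ∑ k, f k := by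
  rw [← Finset.sum_fiberwise Finset.univ σ]
  refine Finset.sum_congr rfl fun k _ => ?_
  have hpos : (clusterCard n σ k : ℝ) ≠ 0 := by
    exact_mod_cast (clusterCard_pos σ hne k).ne'
  rw [Finset.sum_congr rfl (g := fun _ => f k / (clusterCard n σ k : ℝ))]
  · rw [Finset.sum_const, nsmul_eq_mul]
    exact mul_div_cancel₀ _ hpos
  · intro y hy
    rw [(Finset.mem_filter.1 hy).2]

theorem bmc_pow {K n : ℕ} (p : Matrix (Fin K) (Fin K) ℝ) (σ : Fin n → Fin K)
    (hne : ∀ k, ∃ v, σ v = k) (s : ℕ) (x y : Fin n) :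
    (Matrix.of (bmcTrans p σ) ^ (s + 1)) x y
      = (p ^ (s + 1)) (σ x) (σ y) / (clusterCard n σ (σ y) : ℝ) := by
  induction s generalizing x with
  | zero => simp [bmcTrans]
  | succ s ih =>
    rw [pow_succ', Matrix.mul_apply, pow_succ' p, Matrix.mul_apply,
      ← sum_cluster σ hne, Finset.sum_div]
    refine Finset.sum_congr rfl fun z _ => ?_
    rw [ih, Matrix.of_apply, bmcTrans]; ring

/-- The renewal kernel of the block Markov chain is `ℓ¹`-close to its limit. The term `s = 0`,
where `P ^ 0` does not have the block form of `bmc_pow`, contributes the summand `1`. -/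
theorem bmc_deviation {K n : ℕ} (p : Matrix (Fin K) (Fin K) ℝ) (hp0 : ∀ i j, 0 ≤ p i j)
    (pst : Fin K → ℝ) (hpst0 : ∀ i, 0 ≤ pst i) (hpst1 : ∑ i, pst i = 1)
    (σ : Fin n → Fin K) (hne : ∀ k, ∃ v, σ v = k) (e : Fin n × Fin n) (C : ℝ)
    (hC : ∀ S : ℕ, ∑ s ∈ Finset.range S, |(p ^ s) (σ e.2) (σ e.1) - pst (σ e.1)| ≤ C) (S : ℕ) :
    ∑ s ∈ Finset.range S, |(Matrix.of (bmcTrans p σ) ^ s) e.2 e.1 * bmcTrans p σ e.1 e.2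
        - bmcEquilib pst σ e.1 * bmcTrans p σ e.1 e.2|
      ≤ bmcTrans p σ e.1 e.2 * (C + 1) := by
  have hb : 0 ≤ bmcTrans p σ e.1 e.2 := div_nonneg (hp0 _ _) (Nat.cast_nonneg _)
  have hV : (1 : ℝ) ≤ clusterCard n σ (σ e.1) := by exact_mod_cast clusterCard_pos σ hne _
  have hC0 : 0 ≤ C := by simpa using hC 0
  simp_rw [← sub_mul, abs_mul, abs_of_nonneg hb]
  rw [← Finset.sum_mul, mul_comm]
  refine mul_le_mul_of_nonneg_left ?_ hb
  cases S with
  | zero => simp; linarith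
  | succ S =>
    rw [Finset.sum_range_succ']
    refine add_le_add ?_ ?_
    · refine le_trans (Finset.sum_le_sum (g := fun s =>
        |(p ^ (s + 1)) (σ e.2) (σ e.1) - pst (σ e.1)|) fun s _ => ?_) ?_
      · rw [bmc_pow p σ hne, bmcEquilib, ← sub_div, abs_div, abs_of_nonneg (by linarith : (0 : ℝ) ≤
          clusterCard n σ (σ e.1))]
        exact div_le_self (abs_nonneg _) hV
      · have := hC (S + 1)
        rw [Finset.sum_range_succ'] at this
        linarith [abs_nonneg ((p ^ 0) (σ e.2) (σ e.1) - pst (σ e.1))]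
    · have h0 : 0 ≤ bmcEquilib pst σ e.1 := div_nonneg (hpst0 _) (Nat.cast_nonneg _)
      have h1 : bmcEquilib pst σ e.1 ≤ 1 := by
        refine (div_le_self (hpst0 _) hV).trans ?_
        rw [← hpst1]
        exact Finset.single_le_sum (fun i _ => hpst0 i) (Finset.mem_univ _)
      rw [pow_zero, Matrix.one_apply, abs_le]
      split_ifs <;> constructor <;> linarith

/-! ### Poisson moments and limits -/

theorem poisson_hasSum_descFactorial (r : ℝ) (j : ℕ) :
    HasSum (fun k => poissonPMF r k * (k.descFactorial j : ℝ)) (r ^ j) := by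
  rw [← hasSum_nat_add_iff' j]
  have h0 : ∑ i ∈ Finset.range j, poissonPMF r i * (i.descFactorial j : ℝ) = 0 :=
    Finset.sum_eq_zero fun i hi => by
      rw [Nat.descFactorial_eq_zero_iff_lt.2 (Finset.mem_range.1 hi)]; simp
  rw [h0, sub_zero]
  have hexp : HasSum (fun k : ℕ => r ^ k / (k.factorial : ℝ)) (Real.exp r) := by
    rw [Real.exp_eq_exp_ℝ]; exact NormedSpace.expSeries_div_hasSum_exp r
  have := hexp.mul_left (Real.exp (-r) * r ^ j)
  rw [mul_right_comm, ← Real.exp_add, neg_add_cancel, Real.exp_zero, one_mul] at this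
  refine this.congr_fun ?_
  intro k
  have hf := Nat.factorial_mul_descFactorial (Nat.le_add_left j k)
  rw [Nat.add_sub_cancel] at hf
  have hf' : ((k + j).factorial : ℝ) = k.factorial * ((k + j).descFactorial j : ℝ) := by
    exact_mod_cast hf.symm
  have h1 : (k.factorial : ℝ) ≠ 0 := by exact_mod_cast k.factorial_ne_zero
  have h2 : ((k + j).descFactorial j : ℝ) ≠ 0 := by
    intro h; rw [h, mul_zero] at hf'; exact (k + j).factorial_ne_zero (by exact_mod_cast hf')
  unfold _root_.poissonPMF
  rw [hf', pow_add]
  field_simp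

/-- Convergence of all factorial moments to those of the Poisson law implies convergence of the
mixed moments `k ^ m * (k)_j`. Here `E n` is the expectation functional of the `n`-th law. -/
theorem moments_of_factorial_moments {r : ℝ} {E : ℕ → (ℕ → ℝ) → ℝ}
    (hadd : ∀ n f g, E n (fun k => f k + g k) = E n f + E n g)
    (hmul : ∀ n (a : ℝ) f, E n (fun k => a * f k) = a * E n f)
    (hE : ∀ j : ℕ, Tendsto (fun n => E n fun k => (k.descFactorial j : ℝ)) atTop (𝓝 (r ^ j)))
    (m j : ℕ) :
    ∃ v : ℝ, HasSum (fun k => poissonPMF r k * ((k : ℝ) ^ m * (k.descFactorial j : ℝ))) v ∧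
      Tendsto (fun n => E n fun k => (k : ℝ) ^ m * (k.descFactorial j : ℝ)) atTop (𝓝 v) := by
  induction m generalizing j with
  | zero =>
    refine ⟨r ^ j, ?_, ?_⟩
    · simpa using poisson_hasSum_descFactorial r j
    · simpa using hE j
  | succ m ih =>
    obtain ⟨v, hv, hv'⟩ := ih (j + 1)
    obtain ⟨u, hu, hu'⟩ := ih j
    have hid : ∀ k : ℕ, (k : ℝ) ^ (m + 1) * (k.descFactorial j : ℝ)
        = (k : ℝ) ^ m * (k.descFactorial (j + 1) : ℝ)
          + j * ((k : ℝ) ^ m * (k.descFactorial j : ℝ)) := by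
      intro k
      rw [Nat.descFactorial_succ]
      rcases le_or_gt j k with h | h
      · push_cast [Nat.cast_sub h]; ring
      · rw [Nat.descFactorial_eq_zero_iff_lt.2 h]; simp
    refine ⟨v + j * u, ?_, ?_⟩
    · refine (hv.add (hu.mul_left (j : ℝ))).congr_fun fun k => ?_
      rw [hid]; ring
    · simp_rw [hid, hadd, hmul]
      exact hv'.add (hu'.const_mul _)

theorem tendsto_descFactorial {c : ℕ → ℝ} {L : ℕ → ℕ} {μ : ℝ} (hc0 : ∀ᶠ n in atTop, 0 ≤ c n)
    (hc : Tendsto c atTop (𝓝 0)) (hcL : Tendsto (fun n => c n * L n) atTop (𝓝 μ)) (j : ℕ) :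
    Tendsto (fun n => c n ^ j * ((L n).descFactorial j : ℝ)) atTop (𝓝 (μ ^ j)) := by
  induction j with
  | zero => simp
  | succ j ih =>
    -- Truncated subtraction causes no harm: `L - j ≤ (L - j : ℕ) ≤ L` always holds.
    have h1 : Tendsto (fun n => c n * ((L n - j : ℕ) : ℝ)) atTop (𝓝 μ) := by
      have hlow : Tendsto (fun n => c n * L n - c n * j) atTop (𝓝 μ) := by
        simpa using hcL.sub (hc.mul_const (j : ℝ))
      refine tendsto_of_tendsto_of_tendsto_of_le_of_le' hlow hcL ?_ ?_
      · filter_upwards [hc0] with n hn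
        rw [← mul_sub]
        refine mul_le_mul_of_nonneg_left ?_ hn
        rw [sub_le_iff_le_add]
        exact_mod_cast (by omega : L n ≤ L n - j + j)
      · filter_upwards [hc0] with n hn
        refine mul_le_mul_of_nonneg_left ?_ hn
        exact_mod_cast Nat.sub_le _ _
    have := h1.mul ih
    rw [← pow_succ'] at this
    refine this.congr fun n => ?_
    rw [Nat.descFactorial_succ]; push_cast; ring

/-- **Lemma (convergence of moments).** If `X` starts in equilibrium,
`e_n ∈ V_{k₁} × V_{k₂}` with `p_{k₁,k₂} > 0`, and `Y` is Poisson with rate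
`λ π(k₁) α_{k₁}⁻¹ α_{k₂}⁻¹ p_{k₁,k₂}`, then `E[N_{X,e_n}^m] → E[Y^m]` for every `m`. -/
theorem poisson_moment_convergence_edge_count
    (K : ℕ) (hK : 1 ≤ K)
    (p : Matrix (Fin K) (Fin K) ℝ)
    (hp0 : ∀ i j, 0 ≤ p i j) (hp1 : ∀ i, ∑ j, p i j = 1)
    -- irreducible and aperiodic (equivalently, primitive)
    (hprim : ∃ r : ℕ, 0 < r ∧ ∀ i j, 0 < (p ^ r) i j)
    (pst : Fin K → ℝ) (hpst0 : ∀ i, 0 ≤ pst i) (hpst1 : ∑ i, pst i = 1)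
    (hstat : ∀ j, ∑ i, pst i * p i j = pst j)
    (α : Fin K → ℝ) (hα : ∀ k, 0 < α k) (hα1 : ∑ k, α k = 1)
    (lam : ℝ) (hlam : 0 < lam)
    (σ : (n : ℕ) → Fin n → Fin K)
    (hσne : ∀ n, K ≤ n → ∀ k, ∃ v : Fin n, σ n v = k)
    (hσcard : ∀ k, (fun n => ((clusterCard n (σ n) k : ℝ) - α k * n))
        =o[atTop] fun n => (n : ℝ))
    (ℓ : ℕ → ℕ) (hℓ1 : ∀ n, 1 ≤ ℓ n)
    (hℓ : (fun n => ((ℓ n : ℝ) - lam * (n : ℝ) ^ 2)) =o[atTop] fun n => (n : ℝ) ^ 2)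
    (k₁ k₂ : Fin K) (hp12 : 0 < p k₁ k₂)
    -- for each `n ≥ K` a directed edge `e n ∈ V_{k₁} × V_{k₂}`
    (e : (n : ℕ) → K ≤ n → Fin n × Fin n)
    (he : ∀ n (hn : K ≤ n), σ n (e n hn).1 = k₁ ∧ σ n (e n hn).2 = k₂) :
    ∀ m : ℕ, ∀ ε : ℝ, 0 < ε → ∃ N : ℕ, ∀ n, ∀ hn : K ≤ n, N ≤ n →
      |(∫ ω, ((edgeCount n (ℓ n) ω (e n hn) : ℝ)) ^ m
          ∂ pathLaw n (ℓ n) (bmcTrans p (σ n)) (bmcEquilib pst (σ n)))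
        - ∑' k : ℕ, poissonPMF (lam * pst k₁ * (α k₁)⁻¹ * (α k₂)⁻¹ * p k₁ k₂) k * (k : ℝ) ^ m|
        < ε := by
  obtain ⟨C₀, hC₀, hC₀S⟩ := ergodic_sum p hp0 hp1 hprim pst hpst0 hpst1 hstat k₂ k₁
  set μ : ℝ := lam * pst k₁ * (α k₁)⁻¹ * (α k₂)⁻¹ * p k₁ k₂ with hμ
  have hμ0 : 0 ≤ μ := by
    have := hα k₁; have := hα k₂; have := hpst0 k₁
    positivity
  -- `b n` is the transition probability along the edge, `c n` the stationary probability of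
  -- traversing it at a given step.
  let V : Fin K → ℕ → ℝ := fun k n => (clusterCard n (σ n) k : ℝ)
  let b : ℕ → ℝ := fun n => p k₁ k₂ / V k₂ n
  let c : ℕ → ℝ := fun n => pst k₁ / V k₁ n * b n
  have hn0 : ∀ᶠ n : ℕ in atTop, (n : ℝ) ≠ 0 := by
    filter_upwards [eventually_gt_atTop 0] with n hn
    exact_mod_cast hn.ne'
  have hVlim : ∀ k, Tendsto (fun n => V k n / n) atTop (𝓝 (α k)) := by
    intro k
    have h := (hσcard k).tendsto_div_nhds_zero.add_const (α k)
    rw [zero_add] at h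
    refine h.congr' ?_
    filter_upwards [hn0] with n hn
    simp only [V]; field_simp; ring
  have hℓlim : Tendsto (fun n => (ℓ n : ℝ) / (n : ℝ) ^ 2) atTop (𝓝 lam) := by
    have h := hℓ.tendsto_div_nhds_zero.add_const lam
    rw [zero_add] at h
    refine h.congr' ?_
    filter_upwards [hn0] with n hn
    field_simp; ring
  have hinv : Tendsto (fun n : ℕ => ((n : ℝ))⁻¹) atTop (𝓝 0) :=
    tendsto_inv_atTop_nhds_zero_nat
  have hVinv : ∀ k, Tendsto (fun n => (V k n)⁻¹) atTop (𝓝 0) := by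
    intro k
    have h := ((hVlim k).inv₀ (hα k).ne').mul hinv
    rw [mul_zero] at h
    refine h.congr' ?_
    filter_upwards [hn0] with n hn
    rw [inv_div, div_mul_eq_mul_div, mul_inv_cancel₀ hn, one_div]
  have hb : Tendsto b atTop (𝓝 0) := by
    simpa [b, div_eq_mul_inv] using (hVinv k₂).const_mul (p k₁ k₂)
  have hc : Tendsto c atTop (𝓝 0) := by
    simpa [c, div_eq_mul_inv] using ((hVinv k₁).const_mul (pst k₁)).mul hb
  have hb0 : ∀ n, 0 ≤ b n := fun n => div_nonneg (hp0 _ _) (Nat.cast_nonneg _)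
  have hc0 : ∀ n, 0 ≤ c n := fun n =>
    mul_nonneg (div_nonneg (hpst0 _) (Nat.cast_nonneg _)) (hb0 n)
  have hcℓ : Tendsto (fun n => c n * ℓ n) atTop (𝓝 μ) := by
    have h := (((hℓlim.mul_const (pst k₁)).mul ((hVlim k₁).inv₀ (hα k₁).ne')).mul
      ((hVlim k₂).inv₀ (hα k₂).ne')).mul_const (p k₁ k₂)
    refine h.congr' ?_
    filter_upwards [hn0] with n hn
    simp only [c, b, inv_div]
    field_simp
  -- The edge exists only for `K ≤ n`; the value for smaller `n` does not affect limits.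
  let E : ℕ → (ℕ → ℝ) → ℝ := fun n f => if hn : K ≤ n then
    pathMean n (ℓ n) (bmcTrans p (σ n)) (bmcEquilib pst (σ n)) (e n hn) f else 0
  have hadd : ∀ n f g, E n (fun k => f k + g k) = E n f + E n g := by
    intro n f g
    by_cases hn : K ≤ n
    · simp only [E, hn, dif_pos, pathMean, mul_add, Finset.sum_add_distrib]
    · simp [E, hn]
  have hmul : ∀ n (a : ℝ) f, E n (fun k => a * f k) = a * E n f := by
    intro n a f
    by_cases hn : K ≤ n
    · simp only [E, hn, dif_pos, pathMean, Finset.mul_sum]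
      exact Finset.sum_congr rfl fun x _ => by ring
    · simp [E, hn]
  have hE : ∀ j : ℕ,
      Tendsto (fun n => E n fun k => (k.descFactorial j : ℝ)) atTop (𝓝 (μ ^ j)) := by
    intro j
    obtain ⟨C, hC, hest⟩ := binom_estimate j (μ + 1) (by positivity)
    have hmain := tendsto_descFactorial (Eventually.of_forall hc0) hc hcℓ j
    have hD : Tendsto (fun n => b n * (C₀ + 1)) atTop (𝓝 0) := by
      simpa using hb.mul_const (C₀ + 1)
    have hbound : Tendsto (fun n => j.factorial * (C * (b n * (C₀ + 1)))) atTop (𝓝 0) := by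
      simpa using (hD.const_mul C).const_mul (j.factorial : ℝ)
    have hdiff : Tendsto (fun n => (E n fun k => (k.descFactorial j : ℝ))
        - c n ^ j * ((ℓ n).descFactorial j : ℝ)) atTop (𝓝 0) := by
      refine squeeze_zero_norm' ?_ hbound
      filter_upwards [eventually_ge_atTop K, hD.eventually_le_const one_pos,
        hcℓ.eventually_le_const (lt_add_one μ)] with n hn hD1 hcM
      have hne := hσne n hn
      obtain ⟨h1, h2⟩ := he n hn
      have hbe : bmcTrans p (σ n) (e n hn).1 (e n hn).2 = b n := by
        simp only [bmcTrans, h1, h2, b, V]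
      have hce : bmcEquilib pst (σ n) (e n hn).1 * bmcTrans p (σ n) (e n hn).1 (e n hn).2
          = c n := by
        rw [hbe]; simp only [bmcEquilib, h1, c, V]
      have key := hest n (bmcTrans p (σ n)) (bmcEquilib pst (σ n)) (e n hn) (b n * (C₀ + 1))
        (fun x => (sum_cluster (σ n) hne _).trans (hp1 _))
        (fun y => by
          have h := sum_cluster (σ n) hne
            (fun k => pst k * p k (σ n y) / (clusterCard n (σ n) (σ n y) : ℝ))
          rw [← Finset.sum_div, hstat] at h
          rw [bmcEquilib, ← h]
          exact Finset.sum_congr rfl fun x _ => by rw [bmcEquilib, bmcTrans]; ring)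
        ((sum_cluster (σ n) hne _).trans hpst1)
        (by rw [hce]; exact hc0 n) (mul_nonneg (hb0 n) (by linarith)) hD1
        (fun S => by
          have h := bmc_deviation p hp0 pst hpst0 hpst1 (σ n) hne (e n hn) C₀
            (by rw [h1, h2]; exact hC₀S) S
          rwa [hbe] at h ⊢)
        (ℓ n) (by rw [hce]; exact hcM)
      rw [hce] at key
      have hEn : E n (fun k => (k.choose j : ℝ)) = pathMean n (ℓ n) (bmcTrans p (σ n))
          (bmcEquilib pst (σ n)) (e n hn) (fun k => (k.choose j : ℝ)) := by
        simp only [E, hn, dif_pos]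
      rw [← hEn] at key
      simp_rw [Nat.descFactorial_eq_factorial_mul_choose, Nat.cast_mul]
      rw [hmul, mul_left_comm, ← mul_sub, norm_mul, Real.norm_natCast, Real.norm_eq_abs]
      gcongr
    simpa using hdiff.add hmain
  intro m ε hε
  obtain ⟨v, hv, hlim⟩ := moments_of_factorial_moments hadd hmul hE m 0
  simp only [Nat.descFactorial_zero, Nat.cast_one, mul_one] at hv hlim
  obtain ⟨N, hN⟩ := (Metric.tendsto_atTop.1 hlim) ε hε
  refine ⟨N, fun n hn hNn => ?_⟩
  have h := hN n hNn
  rw [Real.dist_eq] at h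
  rw [hv.tsum_eq, integral_pathLaw n (ℓ n) (bmcTrans p (σ n)) (bmcEquilib pst (σ n)) (e n hn)
    (fun x y => div_nonneg (hp0 _ _) (Nat.cast_nonneg _))
    (fun x => div_nonneg (hpst0 _) (Nat.cast_nonneg _)) (fun k => (k : ℝ) ^ m)]
  simpa only [E, hn, dif_pos] using h

end
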